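/- arXiv:2304.02863 — 4 statements merged into one kernel-verified Lean document; each statement's English description precedes it below -/
import Mathlib

section
/- Let Γ act on X as described, and assume in addition that the support of μ is all of X. Then the following are equivalent: (a) for every o ∈ X and every Γ-invariant measurable function g : X × X → [0,∞] one has ∫_X g(o, x) dμ(x) = ∫_X g(x, o) dμ(x) (the mass transport principle); (b) Γ acts transitively on X and Γ is unimodular. -/
open MeasureTheory ENNReal

section HaarUniqueness

variable {G : Type*} [Group G] [TopologicalSpace G] [IsTopologicalGroup G]
  [LocallyCompactSpace G] [SigmaCompactSpace G] [T2Space G] [MeasurableSpace G] [BorelSpace G]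

/-- On a σ-compact group, a left-invariant measure that is finite on compact sets and agrees with
a Haar measure on one compact set of nonzero measure is equal to it; no regularity is assumed. -/
theorem MeasureTheory.Measure.eq_of_isMulLeftInvariant_of_measure_isCompact_eq (ν' ν : Measure G)
    [ν.IsHaarMeasure] [IsFiniteMeasureOnCompacts ν'] [ν'.IsMulLeftInvariant] {S : Set G}
    (hS : IsCompact S) (hS0 : ν S ≠ 0) (h : ν' S = ν S) : ν' = ν := by
  have key {s : Set G} (hs : IsCompact (closure s)) :
      ν' s = Measure.haarScalarFactor ν' ν • ν s :=
    Measure.measure_isMulInvariant_eq_smul_of_isCompact_closure ν' ν hs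
  have hc : (Measure.haarScalarFactor ν' ν : ℝ≥0∞) = 1 := by
    have h1 := key (s := S) (by rwa [hS.isClosed.closure_eq])
    rw [h, ENNReal.smul_def, smul_eq_mul] at h1
    exact (ENNReal.mul_eq_right hS0 hS.measure_lt_top.ne).1 h1.symm
  ext s -
  have hmono : Monotone fun n => s ∩ compactCovering G n := fun m n hmn =>
    Set.inter_subset_inter_right _ (compactCovering_subset G hmn)
  have hU : s = ⋃ n, s ∩ compactCovering G n := by
    rw [← Set.inter_iUnion, iUnion_compactCovering, Set.inter_univ]
  rw [hU, hmono.measure_iUnion, hmono.measure_iUnion]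
  congr 1 with n
  have hn := (isCompact_compactCovering G n).closure_of_subset
    (Set.inter_subset_right (s := s))
  rw [key hn, ENNReal.smul_def, hc, one_smul]

/-- A bi-invariant Haar measure on a σ-compact group is invariant under inversion. -/
theorem MeasureTheory.Measure.isInvInvariant_of_isMulRightInvariant (ν : Measure G) [ν.IsHaarMeasure]
    [ν.IsMulRightInvariant] : ν.IsInvInvariant := by
  obtain ⟨K, hK, hK1⟩ := exists_compact_mem_nhds (1 : G)
  have : IsFiniteMeasureOnCompacts ν.inv := ⟨fun C hC => by
    rw [Measure.inv_apply]; exact hC.inv.measure_lt_top⟩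
  refine ⟨Measure.eq_of_isMulLeftInvariant_of_measure_isCompact_eq ν.inv ν (S := K ∪ K⁻¹)
    (hK.union hK.inv) ?_ ?_⟩
  · exact (Measure.measure_pos_of_mem_nhds ν
      (Filter.mem_of_superset hK1 Set.subset_union_left)).ne'
  · rw [Measure.inv_apply, Set.union_inv, inv_inv, Set.union_comm]

end HaarUniqueness

section ProperAction

variable {Γ X : Type*} [Group Γ] [TopologicalSpace Γ] [TopologicalSpace X] [MulAction Γ X]

theorem IsProperMap.isCompact_setOf_smul_mem
    (hproper : IsProperMap fun p : Γ × X => (p.1 • p.2, p.2)) (o : X) {K : Set X}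
    (hK : IsCompact K) : IsCompact {γ : Γ | γ • o ∈ K} := by
  convert (hproper.isCompact_preimage (hK.prod (isCompact_singleton (x := o)))).image
    continuous_fst using 1
  ext γ
  simp

theorem IsProperMap.isClosed_orbit [T1Space X]
    (hproper : IsProperMap fun p : Γ × X => (p.1 • p.2, p.2)) (o : X) :
    IsClosed (MulAction.orbit Γ o) := by
  have h := hproper.isClosedMap _ ((isClosed_singleton (x := o)).preimage continuous_snd)
  convert h.preimage (Continuous.prodMk_left o) using 1
  ext x
  simp [MulAction.mem_orbit_iff]

end ProperAction

section MassTransport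

variable {Γ : Type*} [Group Γ] [TopologicalSpace Γ] [MeasurableSpace Γ] [BorelSpace Γ]
  {X : Type*} [TopologicalSpace X] [SecondCountableTopology X] [MeasurableSpace X] [BorelSpace X]
  [MulAction Γ X] [ContinuousSMul Γ X]

theorem measurable_comp_smul {f : X → ℝ≥0∞} (hf : Measurable f) :
    Measurable fun p : Γ × X => f (p.1 • p.2) :=
  hf.comp continuous_smul.measurable

variable [IsTopologicalGroup Γ]

theorem measurable_comp_inv_smul {f : X → ℝ≥0∞} (hf : Measurable f) :
    Measurable fun p : Γ × X => f (p.1⁻¹ • p.2) :=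
  hf.comp (continuous_fst.inv.smul continuous_snd).measurable

/-- If `Γ` acts transitively and `ν` is invariant under right translations and under
inversion, then every invariant measure on `X` is proportional to the image of `ν` in `X`. -/
theorem lintegral_orbit_mul_lintegral_eq [MulAction.IsPretransitive Γ X] (ν : Measure Γ)
    [SFinite ν] [ν.IsMulRightInvariant] [ν.IsInvInvariant]
    (μ : Measure X) [SFinite μ]
    (hpres : ∀ γ : Γ, Measure.map (fun x : X => γ • x) μ = μ) (o : X)
    {h k : X → ℝ≥0∞} (hh : Measurable h) (hk : Measurable k) :
    (∫⁻ γ, k (γ • o) ∂ν) * ∫⁻ x, h x ∂μ = (∫⁻ x, k x ∂μ) * ∫⁻ γ, h (γ • o) ∂ν := by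
  have orbit_const (f : X → ℝ≥0∞) (x : X) :
      ∫⁻ γ, f (γ • x) ∂ν = ∫⁻ γ, f (γ • o) ∂ν := by
    obtain ⟨σ, rfl⟩ := MulAction.exists_smul_eq Γ o x
    simpa only [smul_smul] using lintegral_mul_right_eq_self (μ := ν) (fun γ => f (γ • o)) σ
  have orbit_inv (f : X → ℝ≥0∞) (x : X) :
      ∫⁻ γ, f (γ⁻¹ • x) ∂ν = ∫⁻ γ, f (γ • o) ∂ν := by
    rw [← orbit_const f x]
    exact lintegral_inv_eq_self (μ := ν) fun γ => f (γ • x)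
  calc (∫⁻ γ, k (γ • o) ∂ν) * ∫⁻ x, h x ∂μ
      = ∫⁻ x, ∫⁻ γ, k (γ⁻¹ • x) * h x ∂ν ∂μ := by
        rw [← lintegral_const_mul _ hh]
        refine lintegral_congr fun x => ?_
        rw [← orbit_inv k x, lintegral_mul_const]
        exact (measurable_comp_inv_smul hk).comp measurable_prodMk_right
    _ = ∫⁻ γ, ∫⁻ x, k (γ⁻¹ • x) * h x ∂μ ∂ν :=
        lintegral_lintegral_swap
          (((measurable_comp_inv_smul hk).mul (hh.comp measurable_snd)).comp
            measurable_swap).aemeasurable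
    _ = ∫⁻ γ, ∫⁻ x, k x * h (γ • x) ∂μ ∂ν := by
        refine lintegral_congr fun γ => ?_
        conv_lhs => rw [← hpres γ]
        rw [lintegral_map (f := fun x => k (γ⁻¹ • x) * h x)
          (((measurable_comp_inv_smul hk).comp measurable_prodMk_left).mul hh)
          (continuous_const_smul γ).measurable]
        simp only [inv_smul_smul]
    _ = ∫⁻ x, ∫⁻ γ, k x * h (γ • x) ∂ν ∂μ :=
        lintegral_lintegral_swap
          ((hk.comp measurable_snd).mul (measurable_comp_smul hh)).aemeasurable
    _ = (∫⁻ x, k x ∂μ) * ∫⁻ γ, h (γ • o) ∂ν := by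
        rw [← lintegral_mul_const _ hk]
        refine lintegral_congr fun x => ?_
        rw [← orbit_const h x, lintegral_const_mul]
        exact (measurable_comp_smul hh).comp measurable_prodMk_right

/-- The mass transport principle applied to `(x, y) ↦ ν {γ | γ⁻¹ • x ∈ A ∧ γ⁻¹ • y ∈ B}`. -/
theorem measure_mul_eq_of_massTransport (ν : Measure Γ) [SFinite ν] [ν.IsMulLeftInvariant]
    (μ : Measure X) [SFinite μ]
    (hpres : ∀ γ : Γ, Measure.map (fun x : X => γ • x) μ = μ)
    (hmtp : ∀ g : X → X → ℝ≥0∞, Measurable (Function.uncurry g) →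
      (∀ (γ : Γ) (x y : X), g (γ • x) (γ • y) = g x y) →
      ∀ o : X, ∫⁻ x, g o x ∂μ = ∫⁻ x, g x o ∂μ)
    (o : X) {A B : Set X} (hA : MeasurableSet A) (hB : MeasurableSet B) :
    ν {γ | γ⁻¹ • o ∈ A} * μ B = ν {γ | γ⁻¹ • o ∈ B} * μ A := by
  have hind {C : Set X} (hC : MeasurableSet C) : Measurable (C.indicator (1 : X → ℝ≥0∞)) :=
    measurable_one.indicator hC
  have hmeas {C : Set X} (hC : MeasurableSet C) : MeasurableSet {γ : Γ | γ⁻¹ • o ∈ C} :=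
    (continuous_inv.smul continuous_const).measurable hC
  have transport {C D : Set X} (hC : MeasurableSet C) (hD : MeasurableSet D) :
      ∫⁻ x, ∫⁻ γ, C.indicator 1 (γ⁻¹ • o) * D.indicator 1 (γ⁻¹ • x) ∂ν ∂μ
        = ν {γ | γ⁻¹ • o ∈ C} * μ D := by
    rw [lintegral_lintegral_swap]
    · rw [← lintegral_indicator_one (hmeas hC), ← lintegral_mul_const]
      · refine lintegral_congr fun γ => ?_
        have hDγ : Measurable fun x : X => D.indicator (1 : X → ℝ≥0∞) (γ⁻¹ • x) :=
          (measurable_comp_inv_smul (hind hD)).comp measurable_prodMk_left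
        rw [lintegral_const_mul _ hDγ]
        congr 1
        rw [← lintegral_indicator_one hD]
        conv_lhs => rw [← hpres γ]
        rw [lintegral_map hDγ (continuous_const_smul γ).measurable]
        simp only [inv_smul_smul]
      · exact measurable_one.indicator (hmeas hC)
    · exact ((((measurable_comp_inv_smul (hind hC)).comp measurable_prodMk_right).comp
        measurable_fst).mul (measurable_comp_inv_smul (hind hD))).comp measurable_swap
        |>.aemeasurable
  have h := hmtp (fun x y => ∫⁻ γ, A.indicator 1 (γ⁻¹ • x) * B.indicator 1 (γ⁻¹ • y) ∂ν)
    ?_ ?_ o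
  · rw [transport hA hB] at h
    rw [h, ← transport hB hA]
    simp only [mul_comm]
  · exact Measurable.lintegral_prod_left' (μ := ν) <| ((measurable_comp_inv_smul (hind hA)).comp
        (measurable_fst.prodMk (measurable_fst.comp measurable_snd))).mul
      ((measurable_comp_inv_smul (hind hB)).comp
        (measurable_fst.prodMk (measurable_snd.comp measurable_snd)))
  · intro σ x y
    rw [← lintegral_mul_left_eq_self (μ := ν) _ σ]
    simp only [mul_inv_rev, smul_smul, inv_mul_cancel_right]

end MassTransport

/-- Let `Γ` be a locally compact, σ-compact Hausdorff topological group with a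
left Haar measure `haar`, acting continuously, properly, by `μ`-preserving isometries on a proper
metric space `X`, where `μ` is a nonzero Borel measure on `X` that is finite on bounded sets and
has full support.  Then the mass transport principle (for every root `o` and every `Γ`-invariant
measurable `g : X × X → [0,∞]`) holds if and only if `Γ` acts transitively on `X` and `Γ` is
unimodular (its left Haar measure is also right-invariant). -/
theorem stmt0 {Γ : Type*} [Group Γ] [TopologicalSpace Γ] [IsTopologicalGroup Γ]
    [LocallyCompactSpace Γ] [SigmaCompactSpace Γ] [T2Space Γ]
    [MeasurableSpace Γ] [BorelSpace Γ]
    {X : Type*} [MetricSpace X] [ProperSpace X] [MeasurableSpace X] [BorelSpace X]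
    [MulAction Γ X] [ContinuousSMul Γ X]
    (haar : Measure Γ) [haar.IsHaarMeasure]
    (μ : Measure X) (hμ0 : μ ≠ 0)
    (hμfin : ∀ s : Set X, Bornology.IsBounded s → μ s < ⊤)
    (hiso : ∀ γ : Γ, Isometry fun x : X => γ • x)
    (hpres : ∀ γ : Γ, Measure.map (fun x : X => γ • x) μ = μ)
    (hproper : IsProperMap fun p : Γ × X => (p.1 • p.2, p.2))
    (hsupp : ∀ U : Set X, IsOpen U → U.Nonempty → 0 < μ U) :
    (∀ g : X → X → ℝ≥0∞, Measurable (Function.uncurry g) →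
        (∀ (γ : Γ) (x y : X), g (γ • x) (γ • y) = g x y) →
        ∀ o : X, ∫⁻ x, g o x ∂μ = ∫⁻ x, g x o ∂μ) ↔
      (MulAction.IsPretransitive Γ X ∧ haar.IsMulRightInvariant) := by
  have : IsFiniteMeasureOnCompacts μ := ⟨fun K hK => hμfin K hK.isBounded⟩
  have ball_nhds (o : X) : {γ : Γ | γ • o ∈ Metric.closedBall o 1} ∈ nhds 1 := by
    refine (continuous_id.smul continuous_const).continuousAt.preimage_mem_nhds ?_
    simpa using Metric.closedBall_mem_nhds o one_pos
  have ball_compact (o : X) : IsCompact {γ : Γ | γ • o ∈ Metric.closedBall o 1} :=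
    hproper.isCompact_setOf_smul_mem o (isCompact_closedBall o 1)
  constructor
  · intro hmtp
    refine ⟨⟨fun o p => ?_⟩, ⟨fun σ => ?_⟩⟩
    · by_contra hne
      have hO : MeasurableSet (MulAction.orbit Γ o) := (hproper.isClosed_orbit o).measurableSet
      have h := hmtp (fun x y => (MulAction.orbit Γ o).indicator 1 x *
        (MulAction.orbit Γ o)ᶜ.indicator 1 y) ?_ ?_ o
      · simp only [MulAction.mem_orbit_self, Set.indicator_of_mem, Pi.one_apply, one_mul,
          Set.mem_compl_iff, not_true_eq_false, not_false_eq_true, Set.indicator_of_notMem,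
          mul_zero, lintegral_zero, lintegral_indicator_one hO.compl] at h
        exact (hsupp _ (hproper.isClosed_orbit o).isOpen_compl ⟨p, hne⟩).ne' h
      · exact ((measurable_one.indicator hO).comp measurable_fst).mul
          ((measurable_one.indicator hO.compl).comp measurable_snd)
      · intro γ x y
        have hmem (z : X) : γ • z ∈ MulAction.orbit Γ o ↔ z ∈ MulAction.orbit Γ o :=
          by
          simp only [← MulAction.orbit_eq_iff, MulAction.orbit_smul]
        by_cases hx : x ∈ MulAction.orbit Γ o <;> by_cases hy : y ∈ MulAction.orbit Γ o <;>
          simp [Set.indicator, hmem, hx, hy]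
    · obtain ⟨o⟩ : Nonempty X := by
        by_contra hX
        rw [not_nonempty_iff] at hX
        exact hμ0 (Measure.eq_zero_of_isEmpty μ)
      have hball := (Metric.isClosed_closedBall (x := o) (ε := 1)).measurableSet
      have hσ : Measurable fun x : X => σ⁻¹ • x := (continuous_const_smul σ⁻¹).measurable
      have hcomp : IsCompact {γ : Γ | γ⁻¹ • o ∈ Metric.closedBall o 1} := (ball_compact o).inv
      have : IsFiniteMeasureOnCompacts (haar.map (· * σ)) := ⟨fun K hK => by
        rw [Measure.map_apply (measurable_mul_const σ) hK.measurableSet]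
        exact ((Homeomorph.mulRight σ).isCompact_preimage.2 hK).measure_lt_top⟩
      refine Measure.eq_of_isMulLeftInvariant_of_measure_isCompact_eq _ haar hcomp
        (Measure.measure_pos_of_mem_nhds haar (inv_mem_nhds_one Γ (ball_nhds o))).ne' ?_
      have h := measure_mul_eq_of_massTransport haar μ hpres hmtp o (hσ hball) hball
      rw [← Measure.map_apply hσ hball, hpres] at h
      have hμball : μ (Metric.closedBall o 1) ≠ 0 :=
        ((hsupp _ Metric.isOpen_ball ⟨o, Metric.mem_ball_self one_pos⟩).trans_le
          (measure_mono Metric.ball_subset_closedBall)).ne'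
      rw [ENNReal.mul_left_inj hμball (hμfin _ Metric.isBounded_closedBall).ne] at h
      rw [← h, Measure.map_apply (measurable_mul_const σ) hcomp.measurableSet]
      simp only [Set.preimage_ofPred_eq, mul_inv_rev, mul_smul, Set.mem_preimage]
  · rintro ⟨htrans, hright⟩ g hg hinv o
    have := Measure.isInvInvariant_of_isMulRightInvariant haar
    have hpos := (Measure.measure_pos_of_mem_nhds haar (ball_nhds o)).ne'
    have hball := (Metric.isClosed_closedBall (x := o) (ε := 1)).measurableSet
    have hν : ∫⁻ γ : Γ, (Metric.closedBall o 1).indicator 1 (γ • o) ∂haar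
        = haar {γ | γ • o ∈ Metric.closedBall o 1} :=
      lintegral_indicator_one (ball_compact o).measurableSet
    have prop {h : X → ℝ≥0∞} (hh : Measurable h) :=
      lintegral_orbit_mul_lintegral_eq haar μ hpres o hh (measurable_one.indicator hball)
    rw [hν] at prop
    have hgo : Measurable fun x => g o x := hg.comp measurable_prodMk_left
    have hgo' : Measurable fun x => g x o := hg.comp measurable_prodMk_right
    refine (ENNReal.mul_right_inj hpos (ball_compact o).measure_lt_top.ne).1 ?_
    rw [prop hgo, prop hgo',
      ← lintegral_inv_eq_self (μ := haar) fun γ => g o (γ • o)]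
    congr 2 with γ
    rw [← hinv γ, smul_inv_smul]
end

section
/- The function h is well defined with 0 < h(x) < ∞ for every x ∈ X, h is Borel measurable and Γ-invariant (h(γx) = h(x)), and for every measurable function f : X → [0,∞] one has ∫_X f dμ = ∫_B h(x) (∫_Γ f(γx) dγ) dμ(x), where dγ denotes integration with respect to the left Haar measure of Γ. -/
open MeasureTheory ENNReal

/-- With `Γ` a locally compact, σ-compact Hausdorff group with left Haar
measure `haar`, acting continuously, properly, by `μ`-preserving isometries on a proper metric
space `X` (with `μ` nonzero and finite on bounded sets), and `B ⊆ X` an open set meeting every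
orbit in a nonempty bounded set, the function `h x := ‖{γ | γ⁻¹ • x ∈ B}‖⁻¹` is well defined with
`0 < h x < ∞`, is Borel measurable and `Γ`-invariant, and for every measurable `f : X → [0,∞]`
one has `∫ f dμ = ∫_B h x · (∫_Γ f (γ • x) dγ) dμ x`. -/
theorem stmt1 {Γ : Type*} [Group Γ] [TopologicalSpace Γ] [IsTopologicalGroup Γ]
    [LocallyCompactSpace Γ] [SigmaCompactSpace Γ] [T2Space Γ]
    [MeasurableSpace Γ] [BorelSpace Γ]
    {X : Type*} [MetricSpace X] [ProperSpace X] [MeasurableSpace X] [BorelSpace X]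
    [MulAction Γ X] [ContinuousSMul Γ X]
    (haar : Measure Γ) [haar.IsHaarMeasure]
    (μ : Measure X) (hμ0 : μ ≠ 0)
    (hμfin : ∀ s : Set X, Bornology.IsBounded s → μ s < ⊤)
    (hiso : ∀ γ : Γ, Isometry fun x : X => γ • x)
    (hpres : ∀ γ : Γ, Measure.map (fun x : X => γ • x) μ = μ)
    (hproper : IsProperMap fun p : Γ × X => (p.1 • p.2, p.2))
    (B : Set X) (hBopen : IsOpen B)
    (hBmeet : ∀ x : X, (MulAction.orbit Γ x ∩ B).Nonempty)
    (hBbdd : ∀ x : X, Bornology.IsBounded (MulAction.orbit Γ x ∩ B)) :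
    (∀ x : X, 0 < haar {γ : Γ | γ⁻¹ • x ∈ B} ∧ haar {γ : Γ | γ⁻¹ • x ∈ B} < ⊤) ∧
    Measurable (fun x : X => (haar {γ : Γ | γ⁻¹ • x ∈ B})⁻¹) ∧
    (∀ (γ₀ : Γ) (x : X),
      (haar {γ : Γ | γ⁻¹ • (γ₀ • x) ∈ B})⁻¹ = (haar {γ : Γ | γ⁻¹ • x ∈ B})⁻¹) ∧
    (∀ f : X → ℝ≥0∞, Measurable f →
      ∫⁻ x, f x ∂μ
        = ∫⁻ x in B, (haar {γ : Γ | γ⁻¹ • x ∈ B})⁻¹ * (∫⁻ γ, f (γ • x) ∂haar) ∂μ) := by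
  have hopen : IsOpen {p : X × Γ | p.2⁻¹ • p.1 ∈ B} :=
    hBopen.preimage (continuous_snd.inv.smul continuous_fst)
  have hpos : ∀ x : X, 0 < haar {γ : Γ | γ⁻¹ • x ∈ B} := fun x => by
    obtain ⟨_, ⟨g, rfl⟩, hg⟩ := hBmeet x
    refine IsOpen.measure_pos haar (hopen.preimage (Continuous.prodMk_right x)) ⟨g⁻¹, ?_⟩
    simpa using hg
  have hfin : ∀ x : X, haar {γ : Γ | γ⁻¹ • x ∈ B} < ⊤ := fun x => by
    have hK : IsCompact (closure (MulAction.orbit Γ x ∩ B)) := (hBbdd x).isCompact_closure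
    have hC := ((hproper.isCompact_preimage
      (hK.prod (isCompact_singleton (x := x)))).image continuous_fst).inv
    refine (measure_mono fun γ hγ => ?_).trans_lt hC.measure_lt_top
    refine Set.mem_inv.2 ⟨(γ⁻¹, x), ⟨subset_closure ⟨⟨γ⁻¹, rfl⟩, hγ⟩, rfl⟩, rfl⟩
  have hmeas : Measurable fun x : X => (haar {γ : Γ | γ⁻¹ • x ∈ B})⁻¹ :=
    (measurable_measure_prodMk_left hopen.measurableSet).inv
  have hinv : ∀ (γ₀ : Γ) (x : X),
      (haar {γ : Γ | γ⁻¹ • (γ₀ • x) ∈ B})⁻¹ = (haar {γ : Γ | γ⁻¹ • x ∈ B})⁻¹ := fun γ₀ x => by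
    rw [← measure_preimage_mul haar γ₀ {γ : Γ | γ⁻¹ • (γ₀ • x) ∈ B}]
    simp [Set.preimage, mul_smul]
  refine ⟨fun x => ⟨hpos x, hfin x⟩, hmeas, hinv, fun f hf => ?_⟩
  have : IsFiniteMeasureOnCompacts μ := ⟨fun _ hK => hμfin _ hK.isBounded⟩
  set h : X → ℝ≥0∞ := fun x => (haar {γ : Γ | γ⁻¹ • x ∈ B})⁻¹
  have hsmul : Measurable fun p : Γ × X => p.1 • p.2 := continuous_smul.measurable
  calc ∫⁻ x, f x ∂μ
      = ∫⁻ x, ∫⁻ γ, f x * h x * B.indicator 1 (γ⁻¹ • x) ∂haar ∂μ := by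
        refine lintegral_congr fun x => ?_
        have hset : MeasurableSet {γ : Γ | γ⁻¹ • x ∈ B} :=
          (hopen.preimage (Continuous.prodMk_right x)).measurableSet
        have hind : (fun γ : Γ => B.indicator (1 : X → ℝ≥0∞) (γ⁻¹ • x))
            = {γ : Γ | γ⁻¹ • x ∈ B}.indicator 1 := rfl
        rw [lintegral_const_mul _ (hind ▸ measurable_one.indicator hset), hind,
          lintegral_indicator_one hset, mul_assoc,
          ENNReal.inv_mul_cancel (hpos x).ne' (hfin x).ne, mul_one]
    _ = ∫⁻ γ, ∫⁻ x, f x * h x * B.indicator 1 (γ⁻¹ • x) ∂μ ∂haar := by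
        refine lintegral_lintegral_swap (Measurable.aemeasurable ?_)
        exact ((hf.mul hmeas).comp measurable_fst).mul
          (measurable_one.indicator hopen.measurableSet :
            Measurable ({p : X × Γ | p.2⁻¹ • p.1 ∈ B}.indicator (1 : X × Γ → ℝ≥0∞)))
    _ = ∫⁻ γ, ∫⁻ x, B.indicator 1 x * (h x * f (γ • x)) ∂μ ∂haar := by
        refine lintegral_congr fun γ => ?_
        have hc : ∀ g : Γ, Measurable fun x : X => g • x := fun g =>
          (continuous_const_smul g).measurable
        conv_lhs => rw [← hpres γ]
        refine (lintegral_map ((hf.mul hmeas).mul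
          ((measurable_one.indicator hBopen.measurableSet).comp (hc γ⁻¹))) (hc γ)).trans
          (lintegral_congr fun x => ?_)
        change f (γ • x) * h (γ • x) * B.indicator 1 (γ⁻¹ • γ • x) = _
        rw [inv_smul_smul, show h (γ • x) = h x from hinv γ x]
        ring
    _ = ∫⁻ x, ∫⁻ γ, B.indicator 1 x * (h x * f (γ • x)) ∂haar ∂μ := by
        refine lintegral_lintegral_swap (Measurable.aemeasurable ?_)
        exact ((measurable_one.indicator hBopen.measurableSet).comp measurable_snd).mul
          ((hmeas.comp measurable_snd).mul (hf.comp hsmul))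
    _ = ∫⁻ x in B, h x * ∫⁻ γ, f (γ • x) ∂haar ∂μ := by
        rw [← lintegral_indicator hBopen.measurableSet]
        refine lintegral_congr fun x => ?_
        have hfx : Measurable fun γ : Γ => f (γ • x) :=
          hf.comp (continuous_id.smul continuous_const).measurable
        rw [lintegral_const_mul _ (hfx.const_mul _), lintegral_const_mul _ hfx]
        by_cases hx : x ∈ B <;> simp [hx]
end

section
/- Assume Γ is unimodular and that a := ∫_B h dμ ∈ (0,∞). Then for every Γ-invariant measurable function g : X × X → [0,∞] one has ∫_B h(z) (∫_X g(z, y) dμ(y)) dμ(z) = ∫_B h(z) (∫_X g(y, z) dμ(y)) dμ(z). In other words, if a random root o is chosen in X with distribution a⁻¹·(h μ) restricted to B, then the mass transport principle E[∫_X g(o, y) dμ(y)] = E[∫_X g(y, o) dμ(y)] holds. -/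
open MeasureTheory ENNReal

/-- On a unimodular locally compact group, a Haar measure without any regularity assumption is
invariant under inversion on sets with compact closure. -/
theorem measure_inv_of_isCompact_closure {Γ : Type*} [Group Γ] [TopologicalSpace Γ]
    [IsTopologicalGroup Γ] [LocallyCompactSpace Γ] [MeasurableSpace Γ] [BorelSpace Γ]
    (haar : Measure Γ) [haar.IsHaarMeasure] [haar.IsMulRightInvariant]
    {s : Set Γ} (hs : IsCompact (closure s)) : haar s⁻¹ = haar s := by
  have key : ∀ t : Set Γ, IsCompact (closure t) →
      haar t⁻¹ = Measure.haarScalarFactor haar.inv haar • haar t := fun t ht => by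
    rw [← Measure.inv_apply]
    exact Measure.measure_isMulInvariant_eq_smul_of_isCompact_closure haar.inv haar ht
  obtain ⟨K, hK, hK1⟩ := exists_compact_mem_nhds (1 : Γ)
  have hU1 : interior K ∩ (interior K)⁻¹ ∈ nhds (1 : Γ) :=
    Filter.inter_mem (interior_mem_nhds.2 hK1)
      (inv_mem_nhds_one Γ (interior_mem_nhds.2 hK1))
  set U := interior K ∩ (interior K)⁻¹ with hU
  have hUinv : U⁻¹ = U := by rw [hU, Set.inter_inv, inv_inv, Set.inter_comm]
  have hUK : U ⊆ K := Set.inter_subset_left.trans interior_subset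
  have hUc : IsCompact (closure U) := hK.closure_of_subset hUK
  have hUpos : haar U ≠ 0 := (Measure.measure_pos_of_mem_nhds haar hU1).ne'
  have hUfin : haar U ≠ ∞ := ((measure_mono hUK).trans_lt hK.measure_lt_top).ne
  have h1 := key U hUc
  rw [hUinv, ENNReal.smul_def, smul_eq_mul] at h1
  have h2 : (Measure.haarScalarFactor haar.inv haar : ℝ≥0∞) = 1 :=
    (ENNReal.mul_left_inj hUpos hUfin).1 (by rw [← h1, one_mul])
  rw [key s hs, ENNReal.smul_def, h2, one_smul]

/-- For a function on `X × X` invariant under the diagonal action, restricting the first variable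
to `B` and weighting by the measure of `{γ | γ⁻¹ • y ∈ B}` for the second variable `y` gives the
same integral as restricting the second variable to `B` and weighting by the measure of
`{γ | γ • x ∈ B}` for the first variable `x`. -/
theorem lintegral_mul_haar_smul_mem_eq {Γ : Type*} [Group Γ] [TopologicalSpace Γ]
    [IsTopologicalGroup Γ] [MeasurableSpace Γ] [BorelSpace Γ]
    {X : Type*} [TopologicalSpace X] [SecondCountableTopology X] [MeasurableSpace X] [BorelSpace X]
    [MulAction Γ X] [ContinuousSMul Γ X]
    (haar : Measure Γ) [SFinite haar] (μ : Measure X) [SFinite μ]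
    (hpres : ∀ γ : Γ, MeasurePreserving (fun x : X => γ • x) μ μ)
    {B : Set X} (hB : IsOpen B) {φ : X × X → ℝ≥0∞} (hφ : Measurable φ)
    (hinv : ∀ (γ : Γ) (p : X × X), φ (γ • p) = φ p) :
    ∫⁻ p, B.indicator 1 p.1 * φ p * haar {γ : Γ | γ⁻¹ • p.2 ∈ B} ∂(μ.prod μ)
      = ∫⁻ p, B.indicator 1 p.2 * φ p * haar {γ : Γ | γ • p.1 ∈ B} ∂(μ.prod μ) := by
  have hb : Measurable (B.indicator (1 : X → ℝ≥0∞)) := measurable_one.indicator hB.measurableSet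
  have hsm : Measurable fun q : X × Γ => q.2 • q.1 :=
    (continuous_snd.smul continuous_fst).measurable
  have hsi : Measurable fun q : X × Γ => q.2⁻¹ • q.1 :=
    (continuous_snd.inv.smul continuous_fst).measurable
  have hweight : ∀ (c : ℝ≥0∞) (f : Γ → X), Continuous f →
      c * haar {γ | f γ ∈ B} = ∫⁻ γ, c * B.indicator 1 (f γ) ∂haar := fun c f hf => by
    have hf' : Measurable fun γ => B.indicator (1 : X → ℝ≥0∞) (f γ) := hb.comp hf.measurable
    rw [lintegral_const_mul _ hf']
    exact congrArg (c * ·) (lintegral_indicator_one (hf.measurable hB.measurableSet)).symm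
  have m1 : Measurable fun q : (X × X) × Γ =>
      B.indicator 1 q.1.1 * φ q.1 * B.indicator 1 (q.2⁻¹ • q.1.2) :=
    ((hb.comp (measurable_fst.comp measurable_fst)).mul (hφ.comp measurable_fst)).mul
      (hb.comp (hsi.comp ((measurable_snd.comp measurable_fst).prodMk measurable_snd)))
  have m2 : Measurable fun q : (X × X) × Γ =>
      B.indicator 1 q.1.2 * φ q.1 * B.indicator 1 (q.2 • q.1.1) :=
    ((hb.comp (measurable_snd.comp measurable_fst)).mul (hφ.comp measurable_fst)).mul
      (hb.comp (hsm.comp ((measurable_fst.comp measurable_fst).prodMk measurable_snd)))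
  calc _ = ∫⁻ p, ∫⁻ γ, B.indicator 1 p.1 * φ p * B.indicator 1 (γ⁻¹ • p.2) ∂haar ∂(μ.prod μ) := 
        lintegral_congr fun p => hweight _ _ (continuous_inv.smul continuous_const)
    _ = ∫⁻ γ, ∫⁻ p, B.indicator 1 p.1 * φ p * B.indicator 1 (γ⁻¹ • p.2) ∂(μ.prod μ) ∂haar :=
        lintegral_lintegral_swap m1.aemeasurable
    _ = ∫⁻ γ, ∫⁻ p, B.indicator 1 p.2 * φ p * B.indicator 1 (γ • p.1) ∂(μ.prod μ) ∂haar := by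
        refine lintegral_congr fun γ => ?_
        refine (((hpres γ).prod (hpres γ)).lintegral_comp
          (m1.comp measurable_prodMk_right)).symm.trans (lintegral_congr fun p => ?_)
        have hp : φ (γ • p.1, γ • p.2) = φ p := hinv γ p
        simp only [Function.comp_apply, Prod.map, inv_smul_smul, hp]
        ring
    _ = ∫⁻ p, ∫⁻ γ, B.indicator 1 p.2 * φ p * B.indicator 1 (γ • p.1) ∂haar ∂(μ.prod μ) :=
        (lintegral_lintegral_swap m2.aemeasurable).symm
    _ = _ :=
        lintegral_congr fun p => (hweight _ _ (continuous_id.smul continuous_const)).symm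

/-- In the setting of Statement 1, assume moreover that `Γ` is unimodular
(the left Haar measure is also right-invariant) and that `a := ∫_B h dμ ∈ (0,∞)`, where
`h x := ‖{γ | γ⁻¹ • x ∈ B}‖⁻¹`.  Then for every `Γ`-invariant measurable
`g : X × X → [0,∞]` one has
`∫_B h z (∫_X g z y dμ y) dμ z = ∫_B h z (∫_X g y z dμ y) dμ z`;
i.e. choosing the root with law `a⁻¹ (h μ)|_B` satisfies the mass transport principle. -/
theorem stmt2 {Γ : Type*} [Group Γ] [TopologicalSpace Γ] [IsTopologicalGroup Γ]
    [LocallyCompactSpace Γ] [SigmaCompactSpace Γ] [T2Space Γ]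
    [MeasurableSpace Γ] [BorelSpace Γ]
    {X : Type*} [MetricSpace X] [ProperSpace X] [MeasurableSpace X] [BorelSpace X]
    [MulAction Γ X] [ContinuousSMul Γ X]
    (haar : Measure Γ) [haar.IsHaarMeasure] [haar.IsMulRightInvariant]
    (μ : Measure X) (hμ0 : μ ≠ 0)
    (hμfin : ∀ s : Set X, Bornology.IsBounded s → μ s < ⊤)
    (hiso : ∀ γ : Γ, Isometry fun x : X => γ • x)
    (hpres : ∀ γ : Γ, Measure.map (fun x : X => γ • x) μ = μ)
    (hproper : IsProperMap fun p : Γ × X => (p.1 • p.2, p.2))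
    (B : Set X) (hBopen : IsOpen B)
    (hBmeet : ∀ x : X, (MulAction.orbit Γ x ∩ B).Nonempty)
    (hBbdd : ∀ x : X, Bornology.IsBounded (MulAction.orbit Γ x ∩ B))
    (hapos : 0 < ∫⁻ x in B, (haar {γ : Γ | γ⁻¹ • x ∈ B})⁻¹ ∂μ)
    (hafin : (∫⁻ x in B, (haar {γ : Γ | γ⁻¹ • x ∈ B})⁻¹ ∂μ) < ⊤) :
    ∀ g : X → X → ℝ≥0∞, Measurable (Function.uncurry g) →
      (∀ (γ : Γ) (x y : X), g (γ • x) (γ • y) = g x y) →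
      ∫⁻ z in B, (haar {γ : Γ | γ⁻¹ • z ∈ B})⁻¹ * (∫⁻ y, g z y ∂μ) ∂μ
        = ∫⁻ z in B, (haar {γ : Γ | γ⁻¹ • z ∈ B})⁻¹ * (∫⁻ y, g y z ∂μ) ∂μ := by
  intro g hg hginv
  have : IsFiniteMeasureOnCompacts μ := ⟨fun K hK => hμfin K hK.isBounded⟩
  have hmp : ∀ γ : Γ, MeasurePreserving (fun x : X => γ • x) μ μ := fun γ =>
    ⟨(continuous_const_smul γ).measurable, hpres γ⟩
  set N : X → ℝ≥0∞ := fun x => haar {γ : Γ | γ⁻¹ • x ∈ B} with hN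
  have hcpt : ∀ x, IsCompact (closure {γ : Γ | γ⁻¹ • x ∈ B}) := fun x => by
    have hK : IsCompact ((fun p : Γ × X => (p.1 • p.2, p.2)) ⁻¹'
        (closure (MulAction.orbit Γ x ∩ B) ×ˢ {x})) :=
      hproper.isCompact_preimage ((hBbdd x).isCompact_closure.prod isCompact_singleton)
    refine (hK.image (continuous_fst.inv)).closure_of_subset fun γ hγ => ?_
    exact ⟨(γ⁻¹, x), ⟨subset_closure ⟨⟨γ⁻¹, rfl⟩, hγ⟩, rfl⟩, inv_inv γ⟩
  have hNtop : ∀ x, N x ≠ ∞ := fun x =>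
    ((measure_mono subset_closure).trans_lt (hcpt x).measure_lt_top).ne
  have hNzero : ∀ x, N x ≠ 0 := fun x => by
    obtain ⟨_, ⟨γ, rfl⟩, hγ⟩ := hBmeet x
    have hopen : IsOpen {γ : Γ | γ⁻¹ • x ∈ B} :=
      hBopen.preimage (continuous_inv.smul continuous_const)
    exact (hopen.measure_pos haar ⟨γ⁻¹, by simpa using hγ⟩).ne'
  have hNinv : ∀ (γ : Γ) x, N (γ • x) = N x := fun γ x =>
    (measure_preimage_mul haar γ _).symm.trans (by simp [hN, mul_smul])
  have hNsymm : ∀ x, haar {γ : Γ | γ • x ∈ B} = N x := fun x => by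
    rw [← show {γ : Γ | γ⁻¹ • x ∈ B}⁻¹ = {γ : Γ | γ • x ∈ B} by ext γ; simp]
    exact measure_inv_of_isCompact_closure haar (hcpt x)
  have hNmeas : Measurable N :=
    measurable_measure_prodMk_left (ν := haar) (s := {q : X × Γ | q.2⁻¹ • q.1 ∈ B})
      (hBopen.preimage (continuous_snd.inv.smul continuous_fst)).measurableSet
  have hb : Measurable (B.indicator (1 : X → ℝ≥0∞)) :=
    measurable_one.indicator hBopen.measurableSet
  have hset : ∀ f : X → ℝ≥0∞, ∫⁻ z in B, f z ∂μ = ∫⁻ z, B.indicator 1 z * f z ∂μ := fun f => by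
    rw [← lintegral_indicator hBopen.measurableSet]
    refine lintegral_congr fun z => ?_
    by_cases hz : z ∈ B <;> simp [hz]
  have hφ : Measurable fun p : X × X => (N p.1)⁻¹ * (N p.2)⁻¹ * g p.1 p.2 :=
    ((hNmeas.comp measurable_fst).inv.mul (hNmeas.comp measurable_snd).inv).mul hg
  have key := lintegral_mul_haar_smul_mem_eq haar μ hmp hBopen hφ
    (fun γ p => by simp only [Prod.smul_fst, Prod.smul_snd, hNinv, hginv])
  have hcancel : ∀ x, (N x)⁻¹ * N x = 1 := fun x => ENNReal.inv_mul_cancel (hNzero x) (hNtop x)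
  have hL : ∀ p : X × X, B.indicator 1 p.1 * ((N p.1)⁻¹ * (N p.2)⁻¹ * g p.1 p.2) * N p.2
      = B.indicator 1 p.1 * ((N p.1)⁻¹ * g p.1 p.2) := fun p => by
    rw [← mul_one (B.indicator 1 p.1 * ((N p.1)⁻¹ * g p.1 p.2)), ← hcancel p.2]
    ring
  have hR : ∀ p : X × X, B.indicator 1 p.2 * ((N p.1)⁻¹ * (N p.2)⁻¹ * g p.1 p.2) * N p.1
      = B.indicator 1 p.2 * ((N p.2)⁻¹ * g p.1 p.2) := fun p => by
    rw [← mul_one (B.indicator 1 p.2 * ((N p.2)⁻¹ * g p.1 p.2)), ← hcancel p.1]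
    ring
  have mL : Measurable fun p : X × X => B.indicator 1 p.1 * ((N p.1)⁻¹ * g p.1 p.2) :=
    (hb.comp measurable_fst).mul ((hNmeas.comp measurable_fst).inv.mul hg)
  have mR : Measurable fun p : X × X => B.indicator 1 p.2 * ((N p.2)⁻¹ * g p.1 p.2) :=
    (hb.comp measurable_snd).mul ((hNmeas.comp measurable_snd).inv.mul hg)
  simp only [hNsymm] at key
  rw [lintegral_congr hL, lintegral_congr hR, lintegral_prod _ mL.aemeasurable,
    lintegral_prod_symm _ mR.aemeasurable] at key
  rw [hset, hset]
  convert key using 1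
  · refine lintegral_congr fun z => ?_
    have hgz : Measurable fun y => g z y := hg.comp measurable_prodMk_left
    simp only [hN, lintegral_const_mul _ (hgz.const_mul _), lintegral_const_mul _ hgz]
  · refine lintegral_congr fun z => ?_
    have hgz : Measurable fun y => g y z := hg.comp measurable_prodMk_right
    simp only [hN, lintegral_const_mul _ (hgz.const_mul _), lintegral_const_mul _ hgz]
end

section
/- Suppose ν is a Borel probability measure on X such that for every Γ-invariant measurable function g : X × X → [0,∞] one has ∫_X (∫_X g(x, y) dμ(y)) dν(x) = ∫_X (∫_X g(y, x) dμ(y)) dν(x). Then: (a) Γ is unimodular; (b) ∫_B h dμ < ∞; and (c) there exists a constant b ∈ (0,∞), namely b = (∫_B h dμ)⁻¹, such that for every Borel set C ⊆ X, ∫_X ‖{γ ∈ Γ : γ⁻¹x ∈ C}‖ dν(x) = b · μ(C). -/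
open MeasureTheory ENNReal

/-- On a σ-compact locally compact group, left-invariant measures that are finite on compact sets
are proportional, without any regularity assumption. -/
lemma eq_haarScalarFactor_smul_of_sigmaCompact {G : Type*} [Group G] [TopologicalSpace G]
    [IsTopologicalGroup G] [LocallyCompactSpace G] [SigmaCompactSpace G] [T2Space G]
    [MeasurableSpace G] [BorelSpace G] (m' m : Measure G) [m.IsHaarMeasure]
    [IsFiniteMeasureOnCompacts m'] [m'.IsMulLeftInvariant] :
    m' = Measure.haarScalarFactor m' m • m := by
  ext s _
  have hU : s = ⋃ n, s ∩ compactCovering G n := by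
    rw [← Set.inter_iUnion, iUnion_compactCovering, Set.inter_univ]
  have hmono : Monotone fun n => s ∩ compactCovering G n := fun _ _ h =>
    Set.inter_subset_inter_right _ (compactCovering_subset G h)
  rw [hU, hmono.measure_iUnion, hmono.measure_iUnion]
  refine iSup_congr fun n => ?_
  exact Measure.measure_isMulInvariant_eq_smul_of_isCompact_closure m' m
    ((isCompact_compactCovering G n).closure_of_subset Set.inter_subset_right)

lemma measure_inv_smul_mem_smul {Γ : Type*} [Group Γ] [MeasurableSpace Γ] [MeasurableMul Γ]
    {X : Type*} [MulAction Γ X]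
    (haar : Measure Γ) [haar.IsMulLeftInvariant]
    (α : Γ) (x : X) (C : Set X) :
    haar {γ : Γ | γ⁻¹ • α • x ∈ C} = haar {γ : Γ | γ⁻¹ • x ∈ C} := by
  rw [← measure_preimage_mul haar α⁻¹ {γ : Γ | γ⁻¹ • x ∈ C}]
  congr 1
  ext γ
  simp [mul_smul]

section Action

variable {Γ : Type*} [Group Γ] [TopologicalSpace Γ] [IsTopologicalGroup Γ] [MeasurableSpace Γ]
  {X : Type*} [TopologicalSpace X] [MulAction Γ X] [ContinuousSMul Γ X]

lemma measure_inv_smul_mem_ne_zero (haar : Measure Γ) [haar.IsOpenPosMeasure] {B : Set X}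
    (hB : IsOpen B) {x : X} (hx : (MulAction.orbit Γ x ∩ B).Nonempty) :
    haar {γ : Γ | γ⁻¹ • x ∈ B} ≠ 0 := by
  obtain ⟨_, ⟨γ, rfl⟩, hγ⟩ := hx
  refine (hB.preimage (by fun_prop : Continuous fun γ : Γ => γ⁻¹ • x)).measure_ne_zero haar
    ⟨γ⁻¹, ?_⟩
  simpa using hγ

variable [BorelSpace Γ] [MeasurableSpace X] [BorelSpace X]

lemma measurable_inv_smul_left (x : X) : Measurable fun γ : Γ => γ⁻¹ • x :=
  (by fun_prop : Continuous fun γ : Γ => γ⁻¹ • x).measurable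

variable [SecondCountableTopology X]

lemma measurable_inv_smul_prod : Measurable fun p : Γ × X => p.1⁻¹ • p.2 :=
  (by fun_prop : Continuous fun p : Γ × X => p.1⁻¹ • p.2).measurable

lemma measurable_measure_inv_smul_mem (haar : Measure Γ) [SFinite haar] {C : Set X}
    (hC : MeasurableSet C) : Measurable fun x : X => haar {γ : Γ | γ⁻¹ • x ∈ C} :=
  measurable_measure_prodMk_right (measurable_inv_smul_prod hC)

/-- Integrating out the second point of the diagonally averaged product `f ⊗ k`. -/
lemma lintegral_lintegral_average (haar : Measure Γ) [SFinite haar] (μ : Measure X) [SFinite μ]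
    (hpres : ∀ γ : Γ, Measure.map (fun x : X => γ • x) μ = μ)
    {f k : X → ℝ≥0∞} (hf : Measurable f) (hk : Measurable k) (x : X) :
    ∫⁻ y, ∫⁻ γ : Γ, f (γ⁻¹ • x) * k (γ⁻¹ • y) ∂haar ∂μ
      = (∫⁻ γ : Γ, f (γ⁻¹ • x) ∂haar) * ∫⁻ y, k y ∂μ := by
  have hfx : Measurable fun γ : Γ => f (γ⁻¹ • x) := hf.comp (measurable_inv_smul_left x)
  have hkγ : ∀ γ : Γ, ∫⁻ y, k (γ⁻¹ • y) ∂μ = ∫⁻ y, k y ∂μ := fun γ => by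
    conv_rhs => rw [← hpres γ⁻¹]
    exact (lintegral_map hk (continuous_const_smul γ⁻¹).measurable).symm
  rw [lintegral_lintegral_swap]
  · rw [← lintegral_mul_const _ hfx]
    refine lintegral_congr fun γ => ?_
    have hkγ_meas : Measurable fun y => k (γ⁻¹ • y) :=
      hk.comp (continuous_const_smul γ⁻¹).measurable
    rw [lintegral_const_mul _ hkγ_meas, hkγ]
  · exact ((hfx.comp measurable_snd).mul
      (hk.comp (measurable_inv_smul_prod.comp measurable_swap))).aemeasurable

/-- The mass transport principle for diagonally averaged products `f ⊗ k`. -/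
lemma mass_transport_average (haar : Measure Γ) [haar.IsMulLeftInvariant] [SFinite haar]
    (μ : Measure X) [SFinite μ]
    (hpres : ∀ γ : Γ, Measure.map (fun x : X => γ • x) μ = μ) (ν : Measure X)
    (hMTP : ∀ g : X → X → ℝ≥0∞, Measurable (Function.uncurry g) →
      (∀ (γ : Γ) (x y : X), g (γ • x) (γ • y) = g x y) →
      ∫⁻ x, (∫⁻ y, g x y ∂μ) ∂ν = ∫⁻ x, (∫⁻ y, g y x ∂μ) ∂ν)
    {f k : X → ℝ≥0∞} (hf : Measurable f) (hk : Measurable k) :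
    (∫⁻ x, ∫⁻ γ : Γ, f (γ⁻¹ • x) ∂haar ∂ν) * ∫⁻ y, k y ∂μ
      = (∫⁻ x, ∫⁻ γ : Γ, k (γ⁻¹ • x) ∂haar ∂ν) * ∫⁻ y, f y ∂μ := by
  have hmeas : ∀ {u : X → ℝ≥0∞}, Measurable u →
      Measurable fun x : X => ∫⁻ γ : Γ, u (γ⁻¹ • x) ∂haar := fun hu =>
    (hu.comp (measurable_inv_smul_prod.comp measurable_swap)).lintegral_prod_right'
  have h := hMTP (fun x y => ∫⁻ γ : Γ, f (γ⁻¹ • x) * k (γ⁻¹ • y) ∂haar) ?_ ?_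
  · rw [← lintegral_mul_const _ (hmeas hf), ← lintegral_mul_const _ (hmeas hk)]
    simp_rw [← lintegral_lintegral_average haar μ hpres hf hk,
      ← lintegral_lintegral_average haar μ hpres hk hf]
    simpa only [mul_comm (k _)] using h
  · have h₁ : Measurable fun p : (X × X) × Γ => p.2⁻¹ • p.1.1 :=
      measurable_inv_smul_prod.comp (measurable_snd.prodMk (measurable_fst.comp measurable_fst))
    have h₂ : Measurable fun p : (X × X) × Γ => p.2⁻¹ • p.1.2 :=
      measurable_inv_smul_prod.comp (measurable_snd.prodMk (measurable_snd.comp measurable_fst))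
    exact ((hf.comp h₁).mul (hk.comp h₂)).lintegral_prod_right'
  · intro α x y
    rw [← lintegral_mul_left_eq_self (fun γ : Γ => f (γ⁻¹ • x) * k (γ⁻¹ • y)) α⁻¹]
    simp [mul_smul]

end Action

lemma measure_inv_smul_mem_lt_top {Γ : Type*} [Group Γ] [TopologicalSpace Γ]
    [IsTopologicalGroup Γ] [MeasurableSpace Γ]
    {X : Type*} [PseudoMetricSpace X] [ProperSpace X] [MulAction Γ X]
    (hproper : IsProperMap fun p : Γ × X => (p.1 • p.2, p.2))
    (haar : Measure Γ) [IsFiniteMeasureOnCompacts haar] {B : Set X} {x : X}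
    (hx : Bornology.IsBounded (MulAction.orbit Γ x ∩ B)) :
    haar {γ : Γ | γ⁻¹ • x ∈ B} < ⊤ := by
  have hK := (hproper.isCompact_preimage (hx.isCompact_closure.prod (isCompact_singleton (x := x))))
  refine (measure_mono ?_).trans_lt ((hK.image continuous_fst).inv).measure_lt_top
  intro γ hγ
  exact ⟨(γ⁻¹, x), ⟨subset_closure ⟨⟨γ⁻¹, rfl⟩, hγ⟩, rfl⟩, rfl⟩

/-- In the setting of Statement 1, suppose `ν` is a Borel probability measure
on `X` satisfying the mass transport principle
`∫ (∫ g x y dμ y) dν x = ∫ (∫ g y x dμ y) dν x` for every `Γ`-invariant measurable `g`.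
Then (a) `Γ` is unimodular; (b) `∫_B h dμ < ∞`; and (c) with `b = (∫_B h dμ)⁻¹ ∈ (0,∞)`,
for every Borel set `C ⊆ X`, `∫ ‖{γ | γ⁻¹ • x ∈ C}‖ dν x = b · μ C`. -/
theorem stmt3 {Γ : Type*} [Group Γ] [TopologicalSpace Γ] [IsTopologicalGroup Γ]
    [LocallyCompactSpace Γ] [SigmaCompactSpace Γ] [T2Space Γ]
    [MeasurableSpace Γ] [BorelSpace Γ]
    {X : Type*} [MetricSpace X] [ProperSpace X] [MeasurableSpace X] [BorelSpace X]
    [MulAction Γ X] [ContinuousSMul Γ X]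
    (haar : Measure Γ) [haar.IsHaarMeasure]
    (μ : Measure X) (hμ0 : μ ≠ 0)
    (hμfin : ∀ s : Set X, Bornology.IsBounded s → μ s < ⊤)
    (hiso : ∀ γ : Γ, Isometry fun x : X => γ • x)
    (hpres : ∀ γ : Γ, Measure.map (fun x : X => γ • x) μ = μ)
    (hproper : IsProperMap fun p : Γ × X => (p.1 • p.2, p.2))
    (B : Set X) (hBopen : IsOpen B)
    (hBmeet : ∀ x : X, (MulAction.orbit Γ x ∩ B).Nonempty)
    (hBbdd : ∀ x : X, Bornology.IsBounded (MulAction.orbit Γ x ∩ B))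
    (ν : Measure X) [IsProbabilityMeasure ν]
    (hMTP : ∀ g : X → X → ℝ≥0∞, Measurable (Function.uncurry g) →
      (∀ (γ : Γ) (x y : X), g (γ • x) (γ • y) = g x y) →
      ∫⁻ x, (∫⁻ y, g x y ∂μ) ∂ν = ∫⁻ x, (∫⁻ y, g y x ∂μ) ∂ν) :
    haar.IsMulRightInvariant ∧
    (∫⁻ x in B, (haar {γ : Γ | γ⁻¹ • x ∈ B})⁻¹ ∂μ) < ⊤ ∧
    0 < (∫⁻ x in B, (haar {γ : Γ | γ⁻¹ • x ∈ B})⁻¹ ∂μ) ∧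
    ∀ C : Set X, MeasurableSet C →
      ∫⁻ x, haar {γ : Γ | γ⁻¹ • x ∈ C} ∂ν
        = (∫⁻ x in B, (haar {γ : Γ | γ⁻¹ • x ∈ B})⁻¹ ∂μ)⁻¹ * μ C := by
  have hμc : IsFiniteMeasureOnCompacts μ := ⟨fun K hK => hμfin K hK.isBounded⟩
  set I := ∫⁻ x in B, (haar {γ : Γ | γ⁻¹ • x ∈ B})⁻¹ ∂μ with hI
  have hN : ∀ C : Set X, MeasurableSet C → ∀ x : X,
      ∫⁻ γ : Γ, C.indicator 1 (γ⁻¹ • x) ∂haar = haar {γ : Γ | γ⁻¹ • x ∈ C} := fun C hC x =>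
    lintegral_indicator_one (measurable_inv_smul_left x hC)
  have hweight : ∀ x : X, ∫⁻ γ : Γ,
      B.indicator (fun y => (haar {γ : Γ | γ⁻¹ • y ∈ B})⁻¹) (γ⁻¹ • x) ∂haar = 1 := fun x => by
    have hrw : ∀ γ : Γ, B.indicator (fun y => (haar {γ : Γ | γ⁻¹ • y ∈ B})⁻¹) (γ⁻¹ • x)
        = (haar {γ : Γ | γ⁻¹ • x ∈ B})⁻¹ * B.indicator 1 (γ⁻¹ • x) := fun γ => by
      by_cases h : γ⁻¹ • x ∈ B
      · simp only [Set.indicator_of_mem h, measure_inv_smul_mem_smul, Pi.one_apply, mul_one]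
      · simp only [Set.indicator_of_notMem h, mul_zero]
    have hmeas : Measurable fun γ : Γ => B.indicator (1 : X → ℝ≥0∞) (γ⁻¹ • x) :=
      (measurable_one.indicator hBopen.measurableSet).comp (measurable_inv_smul_left x)
    simp_rw [hrw]
    rw [lintegral_const_mul _ hmeas, hN B hBopen.measurableSet]
    exact ENNReal.inv_mul_cancel (measure_inv_smul_mem_ne_zero haar hBopen (hBmeet x))
      (measure_inv_smul_mem_lt_top hproper haar (hBbdd x)).ne
  have key : ∀ C : Set X, MeasurableSet C →
      (∫⁻ x, haar {γ : Γ | γ⁻¹ • x ∈ C} ∂ν) * I = μ C := fun C hC => by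
    have h := mass_transport_average haar μ hpres ν hMTP (measurable_one.indicator hC)
      ((measurable_measure_inv_smul_mem haar hBopen.measurableSet).inv.indicator
        hBopen.measurableSet)
    simp only [Pi.inv_def] at h
    simp_rw [hN C hC, hweight, lintegral_indicator hBopen.measurableSet,
      lintegral_indicator_one hC] at h
    simpa [hI] using h
  obtain ⟨x₀⟩ : Nonempty X := by
    by_contra h
    rw [not_nonempty_iff] at h
    exact hμ0 (Measure.eq_zero_of_isEmpty μ)
  obtain ⟨n, hn⟩ : ∃ n : ℕ, μ (Metric.ball x₀ n) ≠ 0 := by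
    by_contra! h
    refine hμ0 (Measure.measure_univ_eq_zero.1 ?_)
    rw [← Metric.iUnion_ball_nat x₀]
    exact measure_iUnion_null h
  have hfin : μ (Metric.ball x₀ n) ≠ ⊤ := (hμfin _ Metric.isBounded_ball).ne
  have hball := key _ (Metric.isOpen_ball (x := x₀) (ε := n)).measurableSet
  have hI0 : I ≠ 0 := fun h => hn (by rw [← hball, h, mul_zero])
  have hItop : I ≠ ⊤ := fun h => by
    rw [h] at hball
    rcases eq_or_ne (∫⁻ x, haar {γ : Γ | γ⁻¹ • x ∈ Metric.ball x₀ n} ∂ν) 0 with h0 | h0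
    · exact hn (by rw [← hball, h0, zero_mul])
    · exact hfin (by rw [← hball, ENNReal.mul_top h0])
  have hC : ∀ C : Set X, MeasurableSet C →
      ∫⁻ x, haar {γ : Γ | γ⁻¹ • x ∈ C} ∂ν = I⁻¹ * μ C := fun C hC => by
    rw [← key C hC, mul_comm, mul_assoc, ENNReal.mul_inv_cancel hI0 hItop, mul_one]
  refine ⟨⟨fun α => ?_⟩, hItop.lt_top, pos_iff_ne_zero.2 hI0, hC⟩
  set c := Measure.haarScalarFactor (haar.map (· * α)) haar
  have hc : haar.map (· * α) = c • haar := eq_haarScalarFactor_smul_of_sigmaCompact _ _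
  set U := Metric.ball x₀ (n : ℝ)
  have hU : MeasurableSet U := Metric.isOpen_ball.measurableSet
  have hsmul : Measurable fun x : X => α⁻¹ • x := (continuous_const_smul α⁻¹).measurable
  have hshift : ∀ x : X, haar {γ : Γ | γ⁻¹ • x ∈ (fun x : X => α⁻¹ • x) ⁻¹' U}
      = c * haar {γ : Γ | γ⁻¹ • x ∈ U} := fun x => by
    have h : haar.map (· * α) {γ : Γ | γ⁻¹ • x ∈ U} = c * haar {γ : Γ | γ⁻¹ • x ∈ U} := by
      rw [hc]; rfl
    have hS : MeasurableSet {γ : Γ | γ⁻¹ • x ∈ U} := measurable_inv_smul_left x hU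
    rw [← h, Measure.map_apply (measurable_mul_const α) hS]
    simp [mul_smul]
  have hpreU : μ ((fun x : X => α⁻¹ • x) ⁻¹' U) = μ U := by
    rw [← Measure.map_apply hsmul hU, hpres]
  have hscale := hC _ (hsmul hU)
  simp_rw [hshift] at hscale
  rw [lintegral_const_mul _ (measurable_measure_inv_smul_mem haar hU), hC U hU, hpreU] at hscale
  have hc1 : (c : ℝ≥0∞) = 1 := by
    have h0 : I⁻¹ * μ U ≠ 0 := mul_ne_zero (ENNReal.inv_ne_zero.2 hItop) hn
    have ht : I⁻¹ * μ U ≠ ⊤ := ENNReal.mul_ne_top (ENNReal.inv_ne_top.2 hI0) hfin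
    exact (ENNReal.mul_left_inj h0 ht).1 (by rw [hscale, one_mul])
  rw [hc, ENNReal.coe_eq_one.1 hc1, one_smul]
end
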